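/- Let p be an odd prime, let (G,N) be a pair of finite p-groups, let σ : N* → G be a relative central extension of (G,N), and let M be a G-invariant normal subgroup of N*. Then [𝕌₁(M), G] ≤ 𝕌₁([M,G]) · [M, _3 G]. (Lemma 3.6(i) of the paper.) -/

import Mathlib

/-!
For `m ∈ M` and `g ∈ G` put `k = [m, g] ∈ [M, G]`, so that `(m ^ p)^g = (m * k) ^ p`. Since
conjugation by `n ∈ N*` is the action of `σ n`, the commutator `c = [k, m]` lies in `[M, _2 G]` and
commutes with `m` and `k` modulo `[M, _3 G]`. The class-two expansion
`(m * k) ^ p = m ^ p * k ^ p * c ^ (p choose 2)` therefore holds modulo `[M, _3 G]`. As `p` is odd,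
`p` divides `p choose 2`, so the last two factors are products of `p`-th powers of elements of
`[M, G]`, and `[m ^ p, g] ∈ 𝕌₁([M, G]) [M, _3 G]` follows. This subgroup is `G`-invariant, hence
normal in `N*`, and so the elements `x` with `[x, G]` inside it form a subgroup; it contains the
generators `m ^ p` of `𝕌₁(M)`.
-/

/-- The iterated commutator subgroup `[N, _k G]`. -/
def iterCommG {G : Type*} [Group G] (N : Subgroup G) : ℕ → Subgroup G
  | 0 => N
  | k + 1 => ⁅iterCommG N k, (⊤ : Subgroup G)⁆

/-- `𝕌_i(H)`: the subgroup generated by all `p^i`-th powers of elements of `H`. -/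
def pPow {G : Type*} [Group G] (p i : ℕ) (H : Subgroup G) : Subgroup G :=
  Subgroup.closure {x | ∃ h ∈ H, x = h ^ p ^ i}

/-- A relative central extension of the pair `(G, N)`. -/
structure RelCentralExt {M G : Type*} [Group M] [Group G] (σ : M →* G) (N : Subgroup G) where
  /-- the action of `G` on `M`, written `m ↦ m^g` in the paper -/
  act : M → G → M
  act_mul : ∀ m n g, act (m * n) g = act m g * act n g
  act_one : ∀ m, act m 1 = m
  act_act : ∀ m g h, act (act m g) h = act m (g * h)
  range_eq : σ.range = N
  sigma_act : ∀ m g, σ (act m g) = g⁻¹ * σ m * g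
  act_sigma : ∀ m m₁, act m (σ m₁) = m₁⁻¹ * m * m₁
  ker_act : ∀ a ∈ σ.ker, ∀ g : G, act a g = a

namespace RelCentralExt

variable {M G : Type*} [Group M] [Group G] {σ : M →* G} {N : Subgroup G}

/-- The `G`-commutator `[m, g] = m⁻¹ · m^g`. -/
def cmt (E : RelCentralExt σ N) (m : M) (g : G) : M := m⁻¹ * E.act m g

/-- The subgroup `[M', G]` generated by all `G`-commutators `[m, g]`, `m ∈ M'`, `g ∈ G`. -/
def commSub (E : RelCentralExt σ N) (M' : Subgroup M) : Subgroup M :=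
  Subgroup.closure {x | ∃ m ∈ M', ∃ g : G, x = E.cmt m g}

/-- The iterated subgroup `[M', _n G]`. -/
def iterComm (E : RelCentralExt σ N) (M' : Subgroup M) : ℕ → Subgroup M
  | 0 => M'
  | n + 1 => E.commSub (E.iterComm M' n)

end RelCentralExt

namespace RelCentralExt

variable {M G : Type*} [Group M] [Group G] {σ : M →* G} {N : Subgroup G}

/-- The endomorphism `m ↦ m^g`. -/
def actHom (E : RelCentralExt σ N) (g : G) : M →* M :=
  MonoidHom.mk' (fun m => E.act m g) fun m n => E.act_mul m n g

/-- `G`-invariance of a subgroup. -/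
def Inv (E : RelCentralExt σ N) (H : Subgroup M) : Prop := ∀ m ∈ H, ∀ g : G, E.act m g ∈ H

theorem act_inv (E : RelCentralExt σ N) (m : M) (g : G) : E.act m⁻¹ g = (E.act m g)⁻¹ :=
  map_inv (E.actHom g) m

theorem act_pow (E : RelCentralExt σ N) (m : M) (g : G) (n : ℕ) :
    E.act (m ^ n) g = E.act m g ^ n :=
  map_pow (E.actHom g) m n

theorem Inv.closure {E : RelCentralExt σ N} {S : Set M}
    (h : ∀ x ∈ S, ∀ g : G, E.act x g ∈ S) : E.Inv (Subgroup.closure S) := by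
  intro m hm g
  have : Subgroup.closure S ≤ (Subgroup.closure S).comap (E.actHom g) := by
    rw [Subgroup.closure_le]
    exact fun x hx => Subgroup.subset_closure (h x hx g)
  exact this hm

theorem Inv.commSub {E : RelCentralExt σ N} {H : Subgroup M} (h : E.Inv H) :
    E.Inv (E.commSub H) := by
  apply Inv.closure
  rintro _ ⟨m, hm, g, rfl⟩ a
  refine ⟨E.act m a, h m hm a, a⁻¹ * g * a, ?_⟩
  simp only [cmt, E.act_mul, E.act_inv, E.act_act]
  group

theorem Inv.pPow {E : RelCentralExt σ N} {H : Subgroup M} (h : E.Inv H) (p i : ℕ) :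
    E.Inv (pPow p i H) := by
  apply Inv.closure
  rintro _ ⟨m, hm, rfl⟩ a
  exact ⟨E.act m a, h m hm a, E.act_pow _ _ _⟩

/-- `G`-invariant subgroups are normal, because conjugation by `n` is the action of `σ n`. -/
theorem Inv.normal {E : RelCentralExt σ N} {H : Subgroup M} (h : E.Inv H) : H.Normal := by
  refine ⟨fun m hm n => ?_⟩
  have := h m hm (σ n⁻¹)
  rwa [E.act_sigma, inv_inv] at this

theorem cmt_mem {E : RelCentralExt σ N} {H : Subgroup M} {m : M} (hm : m ∈ H) (g : G) :
    E.cmt m g ∈ E.commSub H :=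
  Subgroup.subset_closure ⟨m, hm, g, rfl⟩

theorem conj_mem {E : RelCentralExt σ N} {H : Subgroup M} {m : M} (hm : m ∈ H) (n : M) :
    m⁻¹ * (n⁻¹ * m * n) ∈ E.commSub H := by
  have := cmt_mem (E := E) hm (σ n)
  rwa [cmt, E.act_sigma] at this

theorem Inv.commSub_le {E : RelCentralExt σ N} {H : Subgroup M} (h : E.Inv H) :
    E.commSub H ≤ H := by
  refine (Subgroup.closure_le _).2 ?_
  rintro _ ⟨m, hm, g, rfl⟩
  exact H.mul_mem (H.inv_mem hm) (h m hm g)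

/-- To bound `[⟨S⟩, G]` by a normal subgroup it suffices to treat the generators in `S`. -/
theorem commSub_closure_le {E : RelCentralExt σ N} {H : Subgroup M} (hH : H.Normal) {S : Set M}
    (h : ∀ x ∈ S, ∀ g : G, E.cmt x g ∈ H) : E.commSub (Subgroup.closure S) ≤ H := by
  refine (Subgroup.closure_le _).2 ?_
  rintro _ ⟨m, hm, g, rfl⟩
  have key : Subgroup.closure S ≤ (QuotientGroup.mk' H).eqLocus
      ((QuotientGroup.mk' H).comp (E.actHom g)) := by
    rw [Subgroup.closure_le]
    exact fun x hx => QuotientGroup.eq.2 (h x hx g)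
  exact QuotientGroup.eq.1 (key hm)

end RelCentralExt

/-- The class-two power expansion, for `c = [k, m]` commuting with `m` and `k`. -/
theorem mul_pow_of_central_comm {Q : Type*} [Group Q] {m k c : Q} (h : k * m = m * k * c)
    (hcm : Commute c m) (hck : Commute c k) (n : ℕ) :
    (m * k) ^ n = m ^ n * k ^ n * c ^ n.choose 2 := by
  have h1 : ∀ n : ℕ, k ^ n * m = m * k ^ n * c ^ n := by
    intro n
    induction n with
    | zero => simp
    | succ n ih =>
      calc k ^ (n + 1) * m = k ^ n * (k * m) := by rw [pow_succ, mul_assoc]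
        _ = (k ^ n * m) * k * c := by rw [h]; simp only [mul_assoc]
        _ = m * k ^ n * (c ^ n * k) * c := by rw [ih]; simp only [mul_assoc]
        _ = m * k ^ (n + 1) * c ^ (n + 1) := by
          rw [(hck.pow_left n).eq, pow_succ, pow_succ]; simp only [mul_assoc]
  induction n with
  | zero => simp
  | succ n ih =>
    have hc := (hcm.mul_right hck).pow_left (n.choose 2)
    calc (m * k) ^ (n + 1) = m ^ n * k ^ n * (c ^ n.choose 2 * (m * k)) := by
          rw [pow_succ, ih]; simp only [mul_assoc]
      _ = m ^ n * (k ^ n * m) * k * c ^ n.choose 2 := by rw [hc.eq]; simp only [mul_assoc]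
      _ = m ^ n * m * k ^ n * (c ^ n * k) * c ^ n.choose 2 := by
          rw [h1]; simp only [mul_assoc]
      _ = m ^ (n + 1) * k ^ (n + 1) * (c ^ n * c ^ n.choose 2) := by
          rw [(hck.pow_left n).eq, pow_succ, pow_succ]; simp only [mul_assoc]
      _ = _ := by
          rw [← pow_add, Nat.choose_succ_succ' n 1, Nat.choose_one_right]

open Pointwise

/-- Lemma 3.6(i): let `p` be an odd prime, `(G, N)` a pair of finite `p`-groups,
`σ : N* → G` a relative central extension of `(G, N)`, and `M` a `G`-invariant normal
subgroup of `N*`. Then `[𝕌₁(M), G] ⊆ 𝕌₁([M, G]) · [M, _3 G]`. -/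
theorem stmt_7 {G : Type*} [Group G] [Finite G] (p : ℕ) (hp : p.Prime) (hodd : Odd p)
    (hG : IsPGroup p G) (N : Subgroup G) (hN : N.Normal)
    {Nstar : Type*} [Group Nstar] (σ : Nstar →* G) (E : RelCentralExt σ N)
    (M : Subgroup Nstar) (hMn : M.Normal)
    (hMinv : ∀ m ∈ M, ∀ g : G, E.act m g ∈ M) :
    (E.commSub (pPow p 1 M) : Set Nstar) ⊆
      (pPow p 1 (E.commSub M) : Set Nstar) * (E.iterComm M 3 : Set Nstar) := by

  have hM : E.Inv M := hMinv
  have hL : (E.iterComm M 3).Normal := hM.commSub.commSub.commSub.normal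
  rw [← Subgroup.mul_normal]
  have hU : (pPow p 1 (E.commSub M)).Normal := (hM.commSub.pPow p 1).normal
  set H := pPow p 1 (E.commSub M) ⊔ E.iterComm M 3 with hH
  have hHn : H.Normal := inferInstance
  have hpow : ∀ x ∈ E.commSub M, (x : Nstar ⧸ H) ^ p = 1 := fun x hx => by
    rw [← QuotientGroup.mk_pow, QuotientGroup.eq_one_iff]
    exact (le_sup_left : _ ≤ H) (Subgroup.subset_closure ⟨x, hx, by rw [pow_one]⟩)
  refine RelCentralExt.commSub_closure_le hHn ?_
  rintro _ ⟨m, hm, rfl⟩ g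
  have hk : E.cmt m g ∈ E.commSub M := RelCentralExt.cmt_mem hm g
  have hact : E.act m g = m * E.cmt m g := by simp [RelCentralExt.cmt]
  generalize E.cmt m g = k at hk hact
  obtain ⟨c, hc⟩ : ∃ c, c = k⁻¹ * (m⁻¹ * k * m) := ⟨_, rfl⟩
  have hcD : c ∈ E.iterComm M 2 := hc ▸ RelCentralExt.conj_mem hk m
  have hcK : c ∈ E.commSub M := hM.commSub.commSub_le hcD
  have hcomm : ∀ n : Nstar, Commute (c : Nstar ⧸ H) (n : Nstar ⧸ H) := fun n => by
    have h1 : c⁻¹ * (n⁻¹ * c * n) ∈ H :=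
      (le_sup_right : _ ≤ H) (RelCentralExt.conj_mem hcD n)
    have h2 : (c : Nstar ⧸ H) = (n : Nstar ⧸ H)⁻¹ * c * n := QuotientGroup.eq.2 h1
    rw [Commute, SemiconjBy]
    nth_rw 2 [h2]
    group
  have hexp := mul_pow_of_central_comm (m := (m : Nstar ⧸ H)) (k := k) (c := c)
    (by rw [hc, ← QuotientGroup.mk_mul, ← QuotientGroup.mk_mul, ← QuotientGroup.mk_mul]
        congr 1; group) (hcomm m) (hcomm k) p
  -- `p ∣ p choose 2` because `p` is odd.
  obtain ⟨d, hd⟩ : p ∣ p.choose 2 :=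
    hp.dvd_choose_self two_ne_zero (by have := hp.two_le; rcases hodd with ⟨r, hr⟩; lia)
  rw [hd, pow_mul, hpow k hk, hpow c hcK, one_pow, mul_one, mul_one] at hexp
  refine QuotientGroup.eq.1 (?_ : ((m ^ p ^ 1 : Nstar) : Nstar ⧸ H) = _)
  rw [E.act_pow, hact, pow_one]
  exact hexp.symm
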